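/- Let t ≥ 3 be an odd integer, let M be a matroid, and let e_1, e_2, …, e_n be an odd t-cyclic ordering of M. Let P = {e_{i+1}, e_{i+2}, …, e_{i+k}} be a set of k consecutive elements with |P| ≥ t−1 and |E(M) − P| ≥ t−1. Then (with parity of indices taken modulo n, which is even): r(P) = (|P| + t − 1)/2 if |P| is even; r(P) = (|P| + t − 2)/2 if i+1 is odd and |P| is odd; and r(P) = (|P| + t)/2 if i+1 is even and |P| is odd. -/

import Mathlib

open Set

namespace CyclicArr

variable {α : Type*}

/-- `C` is a circuit of the matroid `M`: a minimal dependent set. -/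
def Cct (M : Matroid α) (C : Set α) : Prop := Minimal M.Dep C

/-- The set of `len` consecutive elements `{e_i, e_{i+1}, …, e_{i+len-1}}`
in a cyclic ordering `e`, subscripts mod `n`. -/
def seg {n : ℕ} (e : ZMod n → α) (i : ℤ) (len : ℕ) : Set α :=
  (fun k : ℕ => e ((i + k : ℤ) : ZMod n)) '' Set.Iio len

/-- `e` is a cyclic ordering of (the ground set of) `M`. -/
def CyclicOrd {n : ℕ} (M : Matroid α) (e : ZMod n → α) : Prop :=
  Function.Injective e ∧ Set.range e = M.E

/-- `e` is a cyclic `(t-1, t)`-ordering of `M`: every `t-1` consecutive elements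
are contained in a `t`-element circuit and a `t`-element cocircuit. -/
def CyclicPropOrd {n : ℕ} (M : Matroid α) (t : ℕ) (e : ZMod n → α) : Prop :=
  CyclicOrd M e ∧
  ∀ i : ℤ, (∃ C, Cct M C ∧ C.ncard = t ∧ seg e i (t-1) ⊆ C) ∧
           (∃ C, Cct M✶ C ∧ C.ncard = t ∧ seg e i (t-1) ⊆ C)

/-- `M` has the cyclic `(t-1, t)`-property: it admits a cyclic `(t-1, t)`-ordering. -/
def HasCycProp (M : Matroid α) (t : ℕ) : Prop :=
  ∃ (n : ℕ) (e : ZMod n → α), CyclicPropOrd M t e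

/-- `e` is an odd `t`-cyclic ordering of `M` (with `n ≥ t+1`): for all odd `i ∈ {1,…,n}`,
`{e_i, …, e_{i+t-1}}` is a `t`-element circuit and `{e_{i+1}, …, e_{i+t}}` is a
`t`-element cocircuit. -/
def OddTCycOrd {n : ℕ} (M : Matroid α) (t : ℕ) (e : ZMod n → α) : Prop :=
  CyclicOrd M e ∧ t + 1 ≤ n ∧
  ∀ i : ℕ, Odd i → 1 ≤ i → i ≤ n →
    (Cct M (seg e (i : ℤ) t) ∧ (seg e (i : ℤ) t).ncard = t) ∧
    (Cct M✶ (seg e ((i : ℤ) + 1) t) ∧ (seg e ((i : ℤ) + 1) t).ncard = t)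

/-- `e` is an even `t`-cyclic ordering of `M` (with `n ≥ t+1`): for all odd `i ∈ {1,…,n}`,
`{e_i, …, e_{i+t-1}}` is both a `t`-element circuit and a `t`-element cocircuit. -/
def EvenTCycOrd {n : ℕ} (M : Matroid α) (t : ℕ) (e : ZMod n → α) : Prop :=
  CyclicOrd M e ∧ t + 1 ≤ n ∧
  ∀ i : ℕ, Odd i → 1 ≤ i → i ≤ n →
    Cct M (seg e (i : ℤ) t) ∧ Cct M✶ (seg e (i : ℤ) t) ∧ (seg e (i : ℤ) t).ncard = t

/-- `M` is `t`-cyclic: it admits an odd or even `t`-cyclic ordering. -/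
def TCyclic (M : Matroid α) (t : ℕ) : Prop :=
  ∃ (n : ℕ) (e : ZMod n → α), OddTCycOrd M t e ∨ EvenTCycOrd M t e

/-- The rank of a set `X` in a matroid `M`: the maximum cardinality of an
independent subset of `X` (for a finite matroid). -/
noncomputable def rkf (M : Matroid α) (X : Set α) : ℕ :=
  sSup {k | ∃ I, M.Indep I ∧ I ⊆ X ∧ I.ncard = k}

/-- The connectivity function `λ(X) = r(X) + r*(X) - |X|`, valued in `ℤ`. -/
noncomputable def lam (M : Matroid α) (X : Set α) : ℤ :=
  (rkf M X : ℤ) + (rkf M✶ X : ℤ) - (X.ncard : ℤ)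

/-- The local connectivity `⊓(X, Y) = r(X) + r(Y) - r(X ∪ Y)`, valued in `ℤ`. -/
noncomputable def pic (M : Matroid α) (X Y : Set α) : ℤ :=
  (rkf M X : ℤ) + (rkf M Y : ℤ) - (rkf M (X ∪ Y) : ℤ)

/-- `X` is exactly `k`-separating: `λ(X) = k - 1`. -/
noncomputable def ExactSep (M : Matroid α) (k : ℕ) (X : Set α) : Prop :=
  lam M X = (k : ℤ) - 1

/-- `(P_1, …, P_m)` is a concatenation of the cyclic ordering `e`, where `P i` is the
block of `l i` consecutive elements starting at position `a i`, and the blocks occur in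
cyclic order and partition the ground set. -/
def IsConcat {n m : ℕ} (e : ZMod n → α) (P : ZMod m → Set α) (a l : ZMod m → ℕ) : Prop :=
  (∀ i, 1 ≤ l i) ∧
  (∀ i, ((a (i + 1) : ZMod n)) = ((a i + l i : ℕ) : ZMod n)) ∧
  (∀ i, P i = seg e (a i : ℤ) (l i)) ∧
  Set.univ.PairwiseDisjoint P ∧
  (⋃ i, P i) = Set.range e

/-- `(P_1, …, P_m)` is a `k`-flower of `M`: a partition of the ground set into nonempty
sets, each exactly `k`-separating, with consecutive unions exactly `k`-separating. -/
noncomputable def IsFlower (M : Matroid α) (k : ℕ) {m : ℕ} (P : ZMod m → Set α) : Prop :=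
  2 ≤ m ∧
  Set.univ.PairwiseDisjoint P ∧ (⋃ i, P i) = M.E ∧
  (∀ i, (P i).Nonempty) ∧
  (∀ i, ExactSep M k (P i)) ∧
  (3 ≤ m → ∀ i, ExactSep M k (P i ∪ P (i + 1)))

/-- `I ⊆ ZMod m` is a set of consecutive members in the cyclic order. -/
def CycInterval {m : ℕ} (I : Set (ZMod m)) : Prop :=
  ∃ (a : ZMod m) (len : ℕ), 0 < len ∧ I = (fun k : ℕ => a + (k : ZMod m)) '' Set.Iio len

/-- A `k`-daisy: a `k`-flower in which the union of a proper nonempty collection of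
petals is exactly `k`-separating precisely when the petals are consecutive. -/
noncomputable def IsDaisy (M : Matroid α) (k : ℕ) {m : ℕ} (P : ZMod m → Set α) : Prop :=
  IsFlower M k P ∧
  ∀ I : Set (ZMod m), I.Nonempty → I ≠ Set.univ →
    (ExactSep M k (⋃ i ∈ I, P i) ↔ CycInterval I)

/-- A `k`-anemone: a `k`-flower in which the union of every proper nonempty collection
of petals is exactly `k`-separating. -/
noncomputable def IsAnemone (M : Matroid α) (k : ℕ) {m : ℕ} (P : ZMod m → Set α) : Prop :=
  IsFlower M k P ∧
  ∀ I : Set (ZMod m), I.Nonempty → I ≠ Set.univ → ExactSep M k (⋃ i ∈ I, P i)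


lemma seg_inj {n : ℕ} {e : ZMod n → α} (he : Function.Injective e) (x y : ℤ)
    (h : e ((x : ℤ) : ZMod n) = e ((y : ℤ) : ZMod n)) (h1 : |x - y| < n) : x = y := by
  have h2 := he h
  rw [ZMod.intCast_eq_intCast_iff_dvd_sub] at h2
  have := Int.eq_zero_of_abs_lt_dvd h2 (by rwa [abs_sub_comm])
  omega

lemma mem_seg {n : ℕ} {e : ZMod n → α} {s : ℤ} {k : ℕ} {x : α} :
    x ∈ seg e s k ↔ ∃ j : ℕ, j < k ∧ e ((s + j : ℤ) : ZMod n) = x := by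
  simp [seg]

lemma seg_encard {n : ℕ} {e : ZMod n → α} (he : Function.Injective e) (s : ℤ) (k : ℕ)
    (hk : k ≤ n) : (seg e s k).encard = k := by
  rw [seg, Set.InjOn.encard_image]
  · rw [← Nat.cast_id k, ← Finset.coe_range]
    rw [Set.encard_coe_eq_coe_finsetCard]; simp
  · intro a ha b hb hab
    simp only [Set.mem_Iio] at ha hb
    have := seg_inj he _ _ hab (by rw [abs_lt]; omega)
    omega

lemma seg_succ {n : ℕ} (e : ZMod n → α) (s : ℤ) (k : ℕ) :
    seg e s (k+1) = insert (e ((s + k : ℤ) : ZMod n)) (seg e s k) := by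
  ext x
  simp only [mem_seg, Set.mem_insert_iff]
  constructor
  · rintro ⟨j, hj, rfl⟩
    rcases Nat.lt_succ_iff_lt_or_eq.1 hj with h | rfl
    · exact Or.inr ⟨j, h, rfl⟩
    · exact Or.inl rfl
  · rintro (rfl | ⟨j, hj, rfl⟩)
    · exact ⟨k, by omega, rfl⟩
    · exact ⟨j, by omega, rfl⟩

lemma seg_subset {n : ℕ} (e : ZMod n → α) (s s' : ℤ) (k k' : ℕ) (h : s' ≤ s)
    (h' : s + k ≤ s' + k') : seg e s k ⊆ seg e s' k' := by
  intro x
  simp only [mem_seg]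
  rintro ⟨j, hj, rfl⟩
  refine ⟨(s - s' + j).toNat, by omega, ?_⟩
  congr 2
  omega

lemma seg_period {n : ℕ} (e : ZMod n → α) (s : ℤ) (q : ℤ) (k : ℕ) :
    seg e (s + n * q) k = seg e s k := by
  unfold seg
  congr 1
  ext j
  push_cast
  simp

lemma seg_inter {n : ℕ} {e : ZMod n → α} (he : Function.Injective e) (s : ℤ) (k t : ℕ)
    (ht : 1 ≤ t) (hn : k + t ≤ n) :
    seg e s (k+1) ∩ seg e (s + k) t = {e ((s + k : ℤ) : ZMod n)} := by
  ext x
  simp only [Set.mem_inter_iff, mem_seg, Set.mem_singleton_iff]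
  constructor
  · rintro ⟨⟨a, ha, rfl⟩, b, hb, h⟩
    have := seg_inj he _ _ h (by rw [abs_lt]; omega)
    congr 2
    omega
  · rintro rfl
    exact ⟨⟨k, by omega, rfl⟩, 0, by omega, by simp⟩

lemma seg_eRk (M : Matroid α) (t n : ℕ) (ht : 3 ≤ t) (htodd : Odd t)
    (e : ZMod n → α) (he : CyclicOrd M e) (htn : t + 1 ≤ n)
    (hC : ∀ s : ℤ, Odd s → M.IsCircuit (seg e s t))
    (hK : ∀ s : ℤ, Even s → M.IsCocircuit (seg e s t)) (s : ℤ) (m : ℕ)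
    (hm : t - 1 + m + (t - 1) ≤ n) :
    M.eRk (seg e s (t - 1 + m)) = ((t - 1 + (m + ((s+1) % 2).toNat) / 2 : ℕ) : ℕ∞) := by
  obtain ⟨hinj, hrange⟩ := he
  induction m with
  | zero =>
    have hind : M.Indep (seg e s (t - 1)) := by
      rcases Int.even_or_odd s with h | h
      · refine (hC (s-1) (by grind)).ssubset_indep ?_
        refine HasSubset.Subset.ssubset_of_ne (seg_subset _ _ _ _ _ (by omega) (by omega)) ?_
        intro h
        have := congrArg Set.encard h
        rw [seg_encard hinj _ _ (by omega), seg_encard hinj _ _ (by omega)] at this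
        have : t - 1 = t := by exact_mod_cast this
        omega
      · refine (hC s h).ssubset_indep ?_
        refine HasSubset.Subset.ssubset_of_ne (seg_subset _ _ _ _ _ (by omega) (by omega)) ?_
        intro h
        have := congrArg Set.encard h
        rw [seg_encard hinj _ _ (by omega), seg_encard hinj _ _ (by omega)] at this
        have : t - 1 = t := by exact_mod_cast this
        omega
    rw [Nat.add_zero, hind.eRk_eq_encard, seg_encard hinj _ _ (by omega)]
    congr 1
    omega
  | succ m ih =>
    have ih := ih (by omega)
    rw [← Nat.add_assoc, seg_succ]
    have hxE : e ((s + (t - 1 + m : ℕ) : ℤ) : ZMod n) ∈ M.E := hrange ▸ Set.mem_range_self _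
    have hxS : e ((s + (t - 1 + m : ℕ) : ℤ) : ZMod n) ∉ seg e s (t-1+m) := by
      rw [mem_seg]
      rintro ⟨j, hj, h⟩
      have := seg_inj hinj _ _ h (by rw [abs_lt]; omega)
      omega
    rcases Int.even_or_odd (s + m) with h | h
    · have hev : Even (s + (t - 1 + m : ℕ) : ℤ) := by
        rw [Int.even_iff] at *; rw [Nat.odd_iff] at htodd; omega
      have hncl : e ((s + (t - 1 + m : ℕ) : ℤ) : ZMod n) ∉ M.closure (seg e s (t-1+m)) := by
        intro hcl
        obtain ⟨C, hCs, hCC, hxC⟩ := Matroid.exists_isCircuit_of_mem_closure hcl hxS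
        rw [← seg_succ] at hCs
        have hint := seg_inter hinj s (t-1+m) t (by omega) (by omega)
        refine hCC.inter_isCocircuit_ne_singleton (hK _ hev)
          (e := e ((s + (t - 1 + m : ℕ) : ℤ) : ZMod n)) ?_
        apply Set.Subset.antisymm
        · rw [← hint]; exact Set.inter_subset_inter_left _ hCs
        · rw [Set.singleton_subset_iff]
          refine ⟨hxC, ?_⟩
          have : e ((s + (t - 1 + m : ℕ) : ℤ) : ZMod n) ∈
            seg e s (t-1+m+1) ∩ seg e (s + (t-1+m:ℕ)) t := by rw [hint]; rfl
          exact this.2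
      rw [Matroid.eRk_insert_eq_add_one ⟨hxE, hncl⟩, ih, ← ENat.coe_one, ← ENat.coe_add]
      congr 1
      rw [Int.even_iff] at h
      omega
    · have hcl : e ((s + (t - 1 + m : ℕ) : ℤ) : ZMod n) ∈ M.closure (seg e s (t-1+m)) := by
        have hc := hC _ h
        have heq : seg e (s + m) t = insert (e ((s + (t - 1 + m : ℕ) : ℤ) : ZMod n))
            (seg e (s+m) (t-1)) := by
          have h1 := seg_succ e (s+m) (t-1)
          rw [show t - 1 + 1 = t by omega] at h1
          rw [h1]; congr 3; push_cast; ring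
        rw [Matroid.mem_closure_iff_exists_isCircuit hxS]
        refine ⟨_, ?_, hc, ?_⟩
        · rw [← seg_succ]
          exact seg_subset _ _ _ _ _ (by omega) (by omega)
        · rw [heq]; exact Set.mem_insert _ _
      rw [← Matroid.eRk_insert_closure_eq, Set.insert_eq_of_mem hcl, Matroid.eRk_closure_eq, ih]
      congr 1
      rw [Int.odd_iff] at h
      omega

lemma rkf_eq (M : Matroid α) (X : Set α) (r : ℕ) (h : M.eRk X = r) (hX : X.Finite) :
    rkf M X = r := by
  have : IsGreatest {k | ∃ I, M.Indep I ∧ I ⊆ X ∧ I.ncard = k} r := by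
    constructor
    · obtain ⟨I, hIX, hI, hc⟩ := Matroid.le_eRk_iff.1 h.ge
      exact ⟨I, hI, hIX, by rw [Set.ncard, hc]; simp⟩
    · rintro k ⟨I, hI, hIX, rfl⟩
      have h1 := hI.encard_le_eRk_of_subset hIX
      rw [h, ← (hX.subset hIX).cast_ncard_eq] at h1
      exact_mod_cast h1
  exact this.csSup_eq

lemma n_even (M : Matroid α) (t n : ℕ) (ht : 3 ≤ t) (htodd : Odd t)
    (e : ZMod n → α) (he : OddTCycOrd M t e) (hn : (t - 1) + (t - 1) ≤ n) : Even n := by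
  by_contra hne
  rw [Nat.not_even_iff_odd] at hne
  obtain ⟨⟨hinj, hrange⟩, htn, H⟩ := he
  rw [Nat.odd_iff] at hne htodd
  have hc := (H (n - t + 3) (by rw [Nat.odd_iff]; omega) (by omega) (by omega)).1.1
  have hk := (H 1 (by decide) (by omega) (by omega)).2.1
  have h2 := seg_inter hinj ((n - t + 3 : ℕ) : ℤ) (t - 1) t (by omega) (by omega)
  have h3 : (((n - t + 3 : ℕ) : ℤ) + (t - 1 : ℕ) : ℤ) = ((1:ℕ):ℤ) + 1 + n * 1 := by omega
  rw [show t - 1 + 1 = t by omega, h3, seg_period] at h2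
  exact Matroid.IsCircuit.inter_isCocircuit_ne_singleton hc hk h2

/-- Let `t ≥ 3` be odd and `e` an odd `t`-cyclic ordering of `M`. If
`P = {e_{i+1},…,e_{i+k}}` with `|P| ≥ t-1` and `|E(M) - P| ≥ t-1`, then
`r(P) = (|P|+t-1)/2` if `|P|` is even, `r(P) = (|P|+t-2)/2` if `i+1` is odd and `|P|` odd,
and `r(P) = (|P|+t)/2` if `i+1` is even and `|P|` odd. -/
theorem statement_12 (M : Matroid α) (t n : ℕ) (ht : 3 ≤ t) (htodd : Odd t)
    (e : ZMod n → α) (he : OddTCycOrd M t e) (i k : ℕ) (hk : k ≤ n)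
    (P : Set α) (hP : P = seg e ((i : ℤ) + 1) k)
    (hsize : t - 1 ≤ k) (hcosize : t - 1 ≤ (M.E \ P).ncard) :
    (Even k → 2 * rkf M P = k + t - 1) ∧
    (Odd (i + 1) → Odd k → 2 * rkf M P = k + t - 2) ∧
    (Even (i + 1) → Odd k → 2 * rkf M P = k + t) := by
  have hfull := he
  obtain ⟨hcyc, htn, H⟩ := he
  obtain ⟨hinj, hrange⟩ := hcyc
  haveI : NeZero n := ⟨by omega⟩
  have hfinE : M.E.Finite := hrange ▸ Set.finite_range e
  have hPE : P ⊆ M.E := by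
    rw [hP, ← hrange]
    rintro _ ⟨j, _, rfl⟩
    exact Set.mem_range_self _
  have hPc : P.ncard = k := by
    rw [Set.ncard, hP, seg_encard hinj _ _ hk]; simp
  have hEc : M.E.ncard = n := by
    rw [← hrange, ← Set.image_univ, Set.ncard_image_of_injective _ hinj, Set.ncard_univ,
      Nat.card_eq_fintype_card, ZMod.card]
  have hd := Set.ncard_sdiff_add_ncard_of_subset hPE hfinE
  have hnk : k + (t - 1) ≤ n := by omega
  have hne := n_even M t n ht htodd e hfull (by omega)
  have red : ∀ s : ℤ, Odd s → ∃ i : ℕ, Odd i ∧ 1 ≤ i ∧ i ≤ n ∧ ∃ q : ℤ, s = i + n * q := by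
    intro s hs
    have h0 := Int.emod_nonneg s (b := (n:ℤ)) (by omega)
    have h1 := Int.emod_lt_of_pos s (b := (n:ℤ)) (by omega)
    have h2 := Int.emod_add_mul_ediv s n
    obtain ⟨c, hc⟩ := hne
    have h3 : (s % n) % 2 = s % 2 := Int.emod_emod_of_dvd _ ⟨c, by omega⟩
    rw [Int.odd_iff] at hs
    refine ⟨(s % n).toNat, ?_, by omega, by omega, s / n, ?_⟩
    · rw [Nat.odd_iff]; omega
    · rw [Int.toNat_of_nonneg h0]; exact h2.symm
  have hC : ∀ s : ℤ, Odd s → M.IsCircuit (seg e s t) := by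
    intro s hs
    obtain ⟨j, hj, h1, h2, q, rfl⟩ := red s hs
    rw [seg_period]
    exact (H j hj h1 h2).1.1
  have hK : ∀ s : ℤ, Even s → M.IsCocircuit (seg e s t) := by
    intro s hs
    obtain ⟨j, hj, h1, h2, q, hq⟩ := red (s - 1) (by grind)
    have : s = (j : ℤ) + 1 + n * q := by linarith
    rw [this, seg_period]
    exact (H j hj h1 h2).2.1
  have hr := seg_eRk M t n ht htodd e ⟨hinj, hrange⟩ htn hC hK ((i:ℤ)+1) (k - (t-1)) (by omega)
  rw [show t - 1 + (k - (t-1)) = k by omega, ← hP] at hr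
  rw [rkf_eq M P _ hr (hfinE.subset hPE)]
  simp only [Nat.even_iff, Nat.odd_iff] at htodd ⊢
  refine ⟨?_, ?_, ?_⟩ <;> intros <;> omega

end CyclicArr
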